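/- Fundamental lemma of the resource logical relation: for all γ and Γ, (1) if γ·Γ ⊢ V : A then γ·Γ ⊨_lin V : A, and (2) if γ·Γ ⊢ M : B then γ·Γ ⊨_lin M : B. -/

import Mathlib

set_option autoImplicit false

/-- A preordered semiring of grades `(Q, +, 0, ·, 1, ≤co)`,
where `≤co` is a preorder respected by `+` and `·`. -/
structure CoSig (Q : Type) where
  add : Q → Q → Q
  zero : Q
  mul : Q → Q → Q
  one : Q
  le : Q → Q → Prop
  add_assoc : ∀ a b c, add (add a b) c = add a (add b c)
  add_comm : ∀ a b, add a b = add b a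
  add_zero : ∀ a, add a zero = a
  mul_assoc : ∀ a b c, mul (mul a b) c = mul a (mul b c)
  one_mul : ∀ a, mul one a = a
  mul_one : ∀ a, mul a one = a
  zero_mul : ∀ a, mul zero a = zero
  mul_zero : ∀ a, mul a zero = zero
  left_distrib : ∀ a b c, mul a (add b c) = add (mul a b) (mul a c)
  right_distrib : ∀ a b c, mul (add a b) c = add (mul a c) (mul b c)
  le_refl : ∀ a, le a a
  le_trans : ∀ a b c, le a b → le b c → le a c
  add_le_add : ∀ a b c d, le a b → le c d → le (add a c) (add b d)
  mul_le_mul : ∀ a b c d, le a b → le c d → le (mul a c) (mul b d)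

namespace CBPVCo

/-- Pointwise comparison of grade vectors: `γ₁ ≤co γ₂`. -/
def vle {Q : Type} (S : CoSig Q) (γ₁ γ₂ : List Q) : Prop := List.Forall₂ S.le γ₁ γ₂

/-- Pointwise addition of grade vectors. -/
def vadd {Q : Type} (S : CoSig Q) (γ₁ γ₂ : List Q) : List Q := List.zipWith S.add γ₁ γ₂

/-- Pointwise scaling of a grade vector: `q·γ`. -/
def vscale {Q : Type} (S : CoSig Q) (q : Q) (γ : List Q) : List Q := γ.map (S.mul q)

/-- `γ ≤co 0̄`: every entry of the grade vector is discardable. -/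
def leZero {Q : Type} (S : CoSig Q) (γ : List Q) : Prop := ∀ q ∈ γ, S.le q S.zero

mutual
/-- CBPV value types (coeffect version): `unit`, thunks `U B`, positive products. -/
inductive VTy (Q : Type) : Type where
  | unit : VTy Q
  | thunk : CTy Q → VTy Q
  | prod : VTy Q → VTy Q → VTy Q
/-- CBPV computation types (coeffect version): graded functions `A^q → B`,
graded returners `F_q A`, negative products. -/
inductive CTy (Q : Type) : Type where
  | arr : VTy Q → Q → CTy Q → CTy Q
  | F : Q → VTy Q → CTy Q
  | wth : CTy Q → CTy Q → CTy Q
end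

mutual
/-- CBPV values (de Bruijn indices for variables). -/
inductive Val (Q : Type) : Type where
  | var : Nat → Val Q
  | unit : Val Q
  | thunk : Comp Q → Val Q
  | pair : Val Q → Val Q → Val Q
/-- CBPV computations, with grade annotations on binders and on `return`. -/
inductive Comp (Q : Type) : Type where
  | lam : Q → Comp Q → Comp Q
  | app : Comp Q → Val Q → Comp Q
  | force : Val Q → Comp Q
  | split : Q → Val Q → Comp Q → Comp Q
  | cpair : Comp Q → Comp Q → Comp Q
  | fst : Comp Q → Comp Q
  | snd : Comp Q → Comp Q
  | ret : Q → Val Q → Comp Q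
  | letin : Q → Comp Q → Comp Q → Comp Q
end

mutual
/-- The value typing judgment `γ·Γ ⊢ V : A` of the CBPV type-and-coeffect system. -/
inductive VHasTy {Q : Type} (S : CoSig Q) : List Q → List (VTy Q) → Val Q → VTy Q → Prop where
  | var : ∀ {γ : List Q} {Γ : List (VTy Q)} {x : Nat} {q : Q} {A : VTy Q},
      γ.length = Γ.length → Γ[x]? = some A → γ[x]? = some q → S.le q S.one →
      (∀ (i : Nat) (q' : Q), i ≠ x → γ[i]? = some q' → S.le q' S.zero) →
      VHasTy S γ Γ (.var x) A
  | unit : ∀ {γ : List Q} {Γ : List (VTy Q)},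
      γ.length = Γ.length → leZero S γ → VHasTy S γ Γ .unit .unit
  | thunk : ∀ {γ : List Q} {Γ : List (VTy Q)} {M : Comp Q} {B : CTy Q},
      CHasTy S γ Γ M B → VHasTy S γ Γ (.thunk M) (.thunk B)
  | pair : ∀ {γ γ₁ γ₂ : List Q} {Γ : List (VTy Q)} {V₁ V₂ : Val Q} {A₁ A₂ : VTy Q},
      VHasTy S γ₁ Γ V₁ A₁ → VHasTy S γ₂ Γ V₂ A₂ → vle S γ (vadd S γ₁ γ₂) →
      VHasTy S γ Γ (.pair V₁ V₂) (.prod A₁ A₂)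

/-- The computation typing judgment `γ·Γ ⊢ M : B` of the CBPV type-and-coeffect system. -/
inductive CHasTy {Q : Type} (S : CoSig Q) : List Q → List (VTy Q) → Comp Q → CTy Q → Prop where
  | lam : ∀ {γ : List Q} {Γ : List (VTy Q)} {q : Q} {A : VTy Q} {M : Comp Q} {B : CTy Q},
      CHasTy S (q :: γ) (A :: Γ) M B → CHasTy S γ Γ (.lam q M) (.arr A q B)
  | app : ∀ {γ γ₁ γ₂ : List Q} {Γ : List (VTy Q)} {M : Comp Q} {V : Val Q}
      {A : VTy Q} {q : Q} {B : CTy Q},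
      CHasTy S γ₁ Γ M (.arr A q B) → VHasTy S γ₂ Γ V A →
      vle S γ (vadd S γ₁ (vscale S q γ₂)) → CHasTy S γ Γ (.app M V) B
  | force : ∀ {γ : List Q} {Γ : List (VTy Q)} {V : Val Q} {B : CTy Q},
      VHasTy S γ Γ V (.thunk B) → CHasTy S γ Γ (.force V) B
  | ret : ∀ {γ γ₁ : List Q} {Γ : List (VTy Q)} {q : Q} {V : Val Q} {A : VTy Q},
      VHasTy S γ₁ Γ V A → vle S γ (vscale S q γ₁) → CHasTy S γ Γ (.ret q V) (.F q A)
  | letin : ∀ {γ γ₁ γ₂ : List Q} {Γ : List (VTy Q)} {q₁ q₂ : Q} {M N : Comp Q}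
      {A : VTy Q} {B : CTy Q},
      CHasTy S γ₁ Γ M (.F q₁ A) → CHasTy S (S.mul q₁ q₂ :: γ₂) (A :: Γ) N B →
      vle S γ (vadd S (vscale S q₂ γ₁) γ₂) → CHasTy S γ Γ (.letin q₂ M N) B
  | split : ∀ {γ γ₁ γ₂ : List Q} {Γ : List (VTy Q)} {q : Q} {V : Val Q}
      {A₁ A₂ : VTy Q} {N : Comp Q} {B : CTy Q},
      VHasTy S γ₁ Γ V (.prod A₁ A₂) → CHasTy S (q :: q :: γ₂) (A₂ :: A₁ :: Γ) N B →
      vle S γ (vadd S (vscale S q γ₁) γ₂) → CHasTy S γ Γ (.split q V N) B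
  | cpair : ∀ {γ : List Q} {Γ : List (VTy Q)} {M₁ M₂ : Comp Q} {B₁ B₂ : CTy Q},
      CHasTy S γ Γ M₁ B₁ → CHasTy S γ Γ M₂ B₂ → CHasTy S γ Γ (.cpair M₁ M₂) (.wth B₁ B₂)
  | fst : ∀ {γ : List Q} {Γ : List (VTy Q)} {M : Comp Q} {B₁ B₂ : CTy Q},
      CHasTy S γ Γ M (.wth B₁ B₂) → CHasTy S γ Γ (.fst M) B₁
  | snd : ∀ {γ : List Q} {Γ : List (VTy Q)} {M : Comp Q} {B₁ B₂ : CTy Q},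
      CHasTy S γ Γ M (.wth B₁ B₂) → CHasTy S γ Γ (.snd M) B₂
end

/-- Closed values: closures, unit, pairs, and the special untyped
discarded value `⚡` (`bolt`). -/
inductive CloVal (Q : Type) : Type where
  | clo : List Q → List (CloVal Q) → Comp Q → CloVal Q
  | unit : CloVal Q
  | pair : CloVal Q → CloVal Q → CloVal Q
  | bolt : CloVal Q

/-- Closed terminal computations. -/
inductive Terminal (Q : Type) : Type where
  | ret : Q → CloVal Q → Terminal Q
  | lamClo : List Q → List (CloVal Q) → Q → Comp Q → Terminal Q
  | cpairClo : List Q → List (CloVal Q) → Comp Q → Comp Q → Terminal Q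

/-- The resource-tracking value judgment `γ·ρ ⊢_lin V ⇓ W`. -/
inductive EvalVal {Q : Type} (S : CoSig Q) :
    List Q → List (CloVal Q) → Val Q → CloVal Q → Prop where
  | var : ∀ {γ : List Q} {ρ : List (CloVal Q)} {x : Nat} {q : Q} {W : CloVal Q},
      γ.length = ρ.length → ρ[x]? = some W → γ[x]? = some q → S.le q S.one →
      (∀ (i : Nat) (q' : Q), i ≠ x → γ[i]? = some q' → S.le q' S.zero) →
      EvalVal S γ ρ (.var x) W
  | unit : ∀ {γ : List Q} {ρ : List (CloVal Q)},
      γ.length = ρ.length → leZero S γ → EvalVal S γ ρ .unit .unit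
  | thunk : ∀ {γ γ' : List Q} {ρ : List (CloVal Q)} {M : Comp Q},
      vle S γ γ' → EvalVal S γ ρ (.thunk M) (.clo γ' ρ M)
  | pair : ∀ {γ γ₁ γ₂ : List Q} {ρ : List (CloVal Q)} {V₁ V₂ : Val Q} {W₁ W₂ : CloVal Q},
      EvalVal S γ₁ ρ V₁ W₁ → EvalVal S γ₂ ρ V₂ W₂ → vle S γ (vadd S γ₁ γ₂) →
      EvalVal S γ ρ (.pair V₁ V₂) (.pair W₁ W₂)

/-- The resource-tracking big-step judgment `γ·ρ ⊢_lin M ⇓ T`: elimination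
rules at grade `0` discard the eliminated value, binding `⚡` in its place. -/
inductive EvalComp {Q : Type} (S : CoSig Q) :
    List Q → List (CloVal Q) → Comp Q → Terminal Q → Prop where
  | lam : ∀ {γ γ' : List Q} {ρ : List (CloVal Q)} {q : Q} {M : Comp Q},
      vle S γ γ' → EvalComp S γ ρ (.lam q M) (.lamClo γ' ρ q M)
  | cpair : ∀ {γ γ' : List Q} {ρ : List (CloVal Q)} {M₁ M₂ : Comp Q},
      vle S γ γ' → EvalComp S γ ρ (.cpair M₁ M₂) (.cpairClo γ' ρ M₁ M₂)
  | ret : ∀ {γ γ₁ : List Q} {ρ : List (CloVal Q)} {q : Q} {V : Val Q} {W : CloVal Q},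
      q ≠ S.zero → EvalVal S γ₁ ρ V W → vle S γ (vscale S q γ₁) →
      EvalComp S γ ρ (.ret q V) (.ret q W)
  | retZero : ∀ {γ : List Q} {ρ : List (CloVal Q)} {V : Val Q},
      leZero S γ → EvalComp S γ ρ (.ret S.zero V) (.ret S.zero .bolt)
  | app : ∀ {γ γ₁ γ₂ γ' : List Q} {ρ ρ' : List (CloVal Q)} {M M' : Comp Q}
      {V : Val Q} {W : CloVal Q} {q : Q} {T : Terminal Q},
      q ≠ S.zero → EvalComp S γ₁ ρ M (.lamClo γ' ρ' q M') → EvalVal S γ₂ ρ V W →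
      EvalComp S (q :: γ') (W :: ρ') M' T → vle S γ (vadd S γ₁ (vscale S q γ₂)) →
      EvalComp S γ ρ (.app M V) T
  | appZero : ∀ {γ γ₁ γ' : List Q} {ρ ρ' : List (CloVal Q)} {M M' : Comp Q}
      {V : Val Q} {T : Terminal Q},
      EvalComp S γ₁ ρ M (.lamClo γ' ρ' S.zero M') →
      EvalComp S (S.zero :: γ') (.bolt :: ρ') M' T → vle S γ γ₁ →
      EvalComp S γ ρ (.app M V) T
  | force : ∀ {γ γ' : List Q} {ρ ρ' : List (CloVal Q)} {V : Val Q} {M : Comp Q} {T : Terminal Q},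
      EvalVal S γ ρ V (.clo γ' ρ' M) → EvalComp S γ' ρ' M T → EvalComp S γ ρ (.force V) T
  | letin : ∀ {γ γ₁ γ₂ : List Q} {ρ : List (CloVal Q)} {q₁ q₂ : Q} {M N : Comp Q}
      {W : CloVal Q} {T : Terminal Q},
      q₂ ≠ S.zero → EvalComp S γ₁ ρ M (.ret q₁ W) →
      EvalComp S (S.mul q₁ q₂ :: γ₂) (W :: ρ) N T →
      vle S γ (vadd S (vscale S q₂ γ₁) γ₂) → EvalComp S γ ρ (.letin q₂ M N) T
  | letinZero : ∀ {γ γ₂ : List Q} {ρ : List (CloVal Q)} {M N : Comp Q} {T : Terminal Q},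
      EvalComp S (S.zero :: γ₂) (.bolt :: ρ) N T → vle S γ γ₂ →
      EvalComp S γ ρ (.letin S.zero M N) T
  | split : ∀ {γ γ₁ γ₂ : List Q} {ρ : List (CloVal Q)} {q : Q} {V : Val Q}
      {W₁ W₂ : CloVal Q} {N : Comp Q} {T : Terminal Q},
      q ≠ S.zero → EvalVal S γ₁ ρ V (.pair W₁ W₂) →
      EvalComp S (q :: q :: γ₂) (W₂ :: W₁ :: ρ) N T →
      vle S γ (vadd S (vscale S q γ₁) γ₂) → EvalComp S γ ρ (.split q V N) T
  | splitZero : ∀ {γ γ₂ : List Q} {ρ : List (CloVal Q)} {V : Val Q} {N : Comp Q} {T : Terminal Q},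
      EvalComp S (S.zero :: S.zero :: γ₂) (.bolt :: .bolt :: ρ) N T → vle S γ γ₂ →
      EvalComp S γ ρ (.split S.zero V N) T
  | fst : ∀ {γ γ' : List Q} {ρ ρ' : List (CloVal Q)} {M M₁ M₂ : Comp Q} {T : Terminal Q},
      EvalComp S γ ρ M (.cpairClo γ' ρ' M₁ M₂) → EvalComp S γ' ρ' M₁ T →
      EvalComp S γ ρ (.fst M) T
  | snd : ∀ {γ γ' : List Q} {ρ ρ' : List (CloVal Q)} {M M₁ M₂ : Comp Q} {T : Terminal Q},
      EvalComp S γ ρ M (.cpairClo γ' ρ' M₁ M₂) → EvalComp S γ' ρ' M₂ T →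
      EvalComp S γ ρ (.snd M) T

mutual
/-- The resource logical relation on closed values: `W ∈ 𝒲⟦A⟧`. -/
def WRel {Q : Type} (S : CoSig Q) : VTy Q → CloVal Q → Prop
  | .unit, W => W = CloVal.unit
  | .thunk B, W => ∃ (γ : List Q) (ρ : List (CloVal Q)) (M : Comp Q),
      W = CloVal.clo γ ρ M ∧ ∃ (T : Terminal Q), EvalComp S γ ρ M T ∧ TRel S B T
  | .prod A₁ A₂, W => ∃ (W₁ W₂ : CloVal Q), W = CloVal.pair W₁ W₂ ∧
      WRel S A₁ W₁ ∧ WRel S A₂ W₂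

/-- The resource logical relation on closed terminals, where a value graded by
`0` is the discarded value `⚡`: `T ∈ 𝒯⟦B⟧`. -/
def TRel {Q : Type} (S : CoSig Q) : CTy Q → Terminal Q → Prop
  | .F q A, T => ∃ (W : CloVal Q), T = Terminal.ret q W ∧
      ((q = S.zero ∧ W = CloVal.bolt) ∨ (q ≠ S.zero ∧ WRel S A W))
  | .arr A q B, T => ∃ (γ : List Q) (ρ : List (CloVal Q)) (M : Comp Q),
      T = Terminal.lamClo γ ρ q M ∧
      ∀ (W : CloVal Q), ((q = S.zero ∧ W = CloVal.bolt) ∨ (q ≠ S.zero ∧ WRel S A W)) →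
        ∃ (T' : Terminal Q), EvalComp S (q :: γ) (W :: ρ) M T' ∧ TRel S B T'
  | .wth B₁ B₂, T => ∃ (γ : List Q) (ρ : List (CloVal Q)) (M₁ M₂ : Comp Q),
      T = Terminal.cpairClo γ ρ M₁ M₂ ∧
      (∃ (T' : Terminal Q), EvalComp S γ ρ M₁ T' ∧ TRel S B₁ T') ∧
      (∃ (T' : Terminal Q), EvalComp S γ ρ M₂ T' ∧ TRel S B₂ T')
end

/-- The graded relation on closed values: `𝒲_0⟦A⟧ = {⚡}` and
`𝒲_q⟦A⟧ = 𝒲⟦A⟧` for `q ≠ 0`. -/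
def WRelG {Q : Type} (S : CoSig Q) (q : Q) (A : VTy Q) (W : CloVal Q) : Prop :=
  (q = S.zero ∧ W = CloVal.bolt) ∨ (q ≠ S.zero ∧ WRel S A W)

/-- The resource logical relation on computations with graded environments. -/
def MRel {Q : Type} (S : CoSig Q) (B : CTy Q) (γ : List Q) (ρ : List (CloVal Q))
    (M : Comp Q) : Prop :=
  ∃ (T : Terminal Q), EvalComp S γ ρ M T ∧ TRel S B T

/-- The resource logical relation on values with graded environments. -/
def VRel {Q : Type} (S : CoSig Q) (A : VTy Q) (γ : List Q) (ρ : List (CloVal Q))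
    (V : Val Q) : Prop :=
  ∃ (W : CloVal Q), EvalVal S γ ρ V W ∧ WRel S A W

/-- Semantic typing of environments: `γ·Γ ⊨ ρ` — the environment maps every
variable carrying a nonzero grade in `γ·Γ` to a closed value of the expected type. -/
def EnvOk {Q : Type} (S : CoSig Q) (γ : List Q) (Γ : List (VTy Q))
    (ρ : List (CloVal Q)) : Prop :=
  γ.length = Γ.length ∧ ρ.length = Γ.length ∧
  ∀ (x : Nat) (q : Q) (A : VTy Q), γ[x]? = some q → Γ[x]? = some A → q ≠ S.zero →
    ∃ (W : CloVal Q), ρ[x]? = some W ∧ WRel S A W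

/-- Resource semantic typing of values: `γ·Γ ⊨_lin V : A`. -/
def VSem {Q : Type} (S : CoSig Q) (γ : List Q) (Γ : List (VTy Q)) (V : Val Q)
    (A : VTy Q) : Prop :=
  ∀ (ρ : List (CloVal Q)), EnvOk S γ Γ ρ → VRel S A γ ρ V

/-- Resource semantic typing of computations: `γ·Γ ⊨_lin M : B`. -/
def CSem {Q : Type} (S : CoSig Q) (γ : List Q) (Γ : List (VTy Q)) (M : Comp Q)
    (B : CTy Q) : Prop :=
  ∀ (ρ : List (CloVal Q)), EnvOk S γ Γ ρ → MRel S B γ ρ M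

theorem vle_get {Q : Type} {S : CoSig Q} {γ δ : List Q} (h : vle S γ δ) (x : Nat) (d : Q)
    (hd : δ[x]? = some d) : ∃ q, γ[x]? = some q ∧ S.le q d := by
  unfold vle at h
  induction h generalizing x with
  | nil => simp at hd
  | cons h _ ih =>
    cases x with
    | zero => simp at hd; subst hd; exact ⟨_, by simp, h⟩
    | succ x => simp at hd; obtain ⟨q, h1, h2⟩ := ih x hd; exact ⟨q, by simpa using h1, h2⟩

theorem vle_refl {Q : Type} (S : CoSig Q) (γ : List Q) : vle S γ γ := by
  unfold vle
  induction γ with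
  | nil => exact .nil
  | cons a l ih => exact .cons (S.le_refl a) ih

theorem zero_add {Q : Type} (S : CoSig Q) (a : Q) : S.add S.zero a = a := by
  rw [S.add_comm, S.add_zero]

theorem vadd_zero_left {Q : Type} (S : CoSig Q) :
    ∀ (γ₁ γ₂ : List Q), γ₁.length = γ₂.length → vadd S (vscale S S.zero γ₁) γ₂ = γ₂
  | [], [], _ => rfl
  | a :: l, b :: m, h => by
    have := vadd_zero_left S l m (by simpa using h)
    simp only [vadd, vscale] at this
    simp [vadd, vscale, this, S.zero_mul, zero_add]

theorem vadd_zero_right {Q : Type} (S : CoSig Q) :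
    ∀ (γ₁ γ₂ : List Q), γ₁.length = γ₂.length → vadd S γ₁ (vscale S S.zero γ₂) = γ₁
  | [], [], _ => rfl
  | a :: l, b :: m, h => by
    have := vadd_zero_right S l m (by simpa using h)
    simp only [vadd, vscale] at this
    simp [vadd, vscale, this, S.zero_mul, S.add_zero]

theorem leZero_of {Q : Type} (S : CoSig Q) {γ γ₁ : List Q}
    (h : vle S γ (vscale S S.zero γ₁)) : leZero S γ := by
  intro q hq
  unfold vle at h
  obtain ⟨x, hx, hq'⟩ := List.mem_iff_getElem.mp hq
  have hl := h.length_eq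
  have := List.Forall₂.get h hx (by omega)
  simpa [vscale, S.zero_mul, hq'] using this

theorem vle_len {Q : Type} {S : CoSig Q} {γ δ : List Q} (h : vle S γ δ) :
    γ.length = δ.length := List.Forall₂.length_eq h

mutual
theorem VHasTy.len {Q : Type} {S : CoSig Q} {γ : List Q} {Γ : List (VTy Q)} {V : Val Q}
    {A : VTy Q} (h : VHasTy S γ Γ V A) : γ.length = Γ.length := by
  cases h with
  | var h => exact h
  | unit h => exact h
  | thunk h => exact CHasTy.len h
  | pair h1 h2 h =>
    have := VHasTy.len h1
    have := VHasTy.len h2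
    have := vle_len h
    simp [vadd] at this; omega
theorem CHasTy.len {Q : Type} {S : CoSig Q} {γ : List Q} {Γ : List (VTy Q)} {M : Comp Q}
    {B : CTy Q} (h : CHasTy S γ Γ M B) : γ.length = Γ.length := by
  cases h with
  | lam h => simpa using CHasTy.len h
  | app h1 h2 h =>
    have := CHasTy.len h1
    have := VHasTy.len h2
    have := vle_len h
    simp [vadd, vscale] at this; omega
  | force h => exact VHasTy.len h
  | ret h1 h =>
    have := VHasTy.len h1
    have := vle_len h
    simp [vscale] at this; omega
  | letin h1 h2 h =>
    have := CHasTy.len h1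
    have := CHasTy.len h2
    have := vle_len h
    simp [vadd, vscale] at *; omega
  | split h1 h2 h =>
    have := VHasTy.len h1
    have := CHasTy.len h2
    have := vle_len h
    simp [vadd, vscale] at *; omega
  | cpair h1 h2 => exact CHasTy.len h1
  | fst h => exact CHasTy.len h
  | snd h => exact CHasTy.len h
end

theorem EnvOk.mono {Q : Type} {S : CoSig Q} {γ δ : List Q} {Γ : List (VTy Q)}
    {ρ : List (CloVal Q)} (h : EnvOk S γ Γ ρ) (hl : δ.length = Γ.length)
    (hz : ∀ x d : Q, ∀ i : Nat, γ[i]? = some x → δ[i]? = some d → x = S.zero → d = S.zero) :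
    EnvOk S δ Γ ρ := by
  obtain ⟨h1, h2, h3⟩ := h
  refine ⟨hl, h2, fun x q A hq hA hne => ?_⟩
  have hx : x < γ.length := by
    have := (List.getElem?_eq_some_iff.mp hA).1
    omega
  exact h3 x γ[x] A (by simp) hA (fun h0 => hne (hz _ _ x (by simp) hq h0))

theorem EnvOk.cons {Q : Type} {S : CoSig Q} {γ : List Q} {Γ : List (VTy Q)}
    {ρ : List (CloVal Q)} (h : EnvOk S γ Γ ρ) {q : Q} {A : VTy Q} {W : CloVal Q}
    (hW : q ≠ S.zero → WRel S A W) : EnvOk S (q :: γ) (A :: Γ) (W :: ρ) := by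
  obtain ⟨h1, h2, h3⟩ := h
  refine ⟨by simp [h1], by simp [h2], fun x q' A' hq hA hne => ?_⟩
  cases x with
  | zero =>
    simp at hq hA; subst hq hA
    exact ⟨W, by simp, hW hne⟩
  | succ x => simp at hq hA; simpa using h3 x q' A' hq hA hne

theorem EnvOk.add {Q : Type} {S : CoSig Q} {γ γ₁ γ₂ : List Q} {Γ : List (VTy Q)}
    {ρ : List (CloVal Q)}
    (hzero_add : ∀ q₁ q₂ : Q, S.le S.zero (S.add q₁ q₂) → q₁ = S.zero ∧ q₂ = S.zero)
    (h : EnvOk S γ Γ ρ) (h1 : γ₁.length = Γ.length) (h2 : γ₂.length = Γ.length)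
    (hle : vle S γ (vadd S γ₁ γ₂)) : EnvOk S γ₁ Γ ρ ∧ EnvOk S γ₂ Γ ρ := by
  have key : ∀ (i : Nat) (a b : Q), γ[i]? = some S.zero → γ₁[i]? = some a → γ₂[i]? = some b →
      a = S.zero ∧ b = S.zero := by
    intro i a b h0 ha hb
    obtain ⟨q, hq, hq'⟩ := vle_get hle i (S.add a b)
      (by simp [vadd, List.getElem?_zipWith, ha, hb])
    rw [h0] at hq; cases hq
    exact hzero_add _ _ hq'
  constructor
  · refine h.mono h1 fun x d i hx hd h0 => ?_
    subst h0
    have hi := (List.getElem?_eq_some_iff.mp hd).1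
    exact (key i d (γ₂[i]'(by omega)) hx hd (by simp)).1
  · refine h.mono h2 fun x d i hx hd h0 => ?_
    subst h0
    have hi := (List.getElem?_eq_some_iff.mp hd).1
    exact (key i (γ₁[i]'(by omega)) d hx (by simp) hd).2

theorem EnvOk.unscale {Q : Type} {S : CoSig Q} {γ : List Q} {Γ : List (VTy Q)}
    {ρ : List (CloVal Q)} {q : Q}
    (hzero_div : ∀ q₁ q₂ : Q, S.mul q₁ q₂ = S.zero → q₁ = S.zero ∨ q₂ = S.zero)
    (hq : q ≠ S.zero) (h : EnvOk S (vscale S q γ) Γ ρ) : EnvOk S γ Γ ρ := by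
  refine h.mono (by simpa [vscale] using h.1) fun x d i hx hd h0 => ?_
  subst h0
  simp [vscale, hd] at hx
  exact (hzero_div _ _ hx).resolve_left hq

theorem vscale_len {Q : Type} (S : CoSig Q) (q : Q) (γ : List Q) :
    (vscale S q γ).length = γ.length := by simp [vscale]

mutual
theorem fundV {Q : Type} (S : CoSig Q)
    (hnontriv : S.one ≠ S.zero)
    (hzero_add : ∀ q₁ q₂ : Q, S.le S.zero (S.add q₁ q₂) → q₁ = S.zero ∧ q₂ = S.zero)
    (hzero_div : ∀ q₁ q₂ : Q, S.mul q₁ q₂ = S.zero → q₁ = S.zero ∨ q₂ = S.zero)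
    {γ : List Q} {Γ : List (VTy Q)} {V : Val Q} {A : VTy Q}
    (h : VHasTy S γ Γ V A) : VSem S γ Γ V A := by
  intro ρ hρ
  cases h with
  | var hl hA hq hle ho =>
    obtain ⟨W, hW, hr⟩ := hρ.2.2 _ _ _ hq hA (by
      rintro rfl
      exact hnontriv (hzero_add S.one S.zero (by rwa [S.add_zero])).1)
    exact ⟨W, .var (hl.trans hρ.2.1.symm) hW hq hle ho, hr⟩
  | unit hl hz =>
    exact ⟨_, .unit (hl.trans hρ.2.1.symm) hz, by simp [WRel]⟩
  | @thunk _ _ M B h =>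
    have := fundC S hnontriv hzero_add hzero_div h ρ hρ
    exact ⟨_, .thunk (vle_refl S γ), by simp only [WRel]; exact ⟨γ, ρ, M, rfl, this⟩⟩
  | pair h1 h2 h =>
    obtain ⟨e1, e2⟩ := hρ.add hzero_add h1.len h2.len h
    obtain ⟨W1, v1, r1⟩ := fundV S hnontriv hzero_add hzero_div h1 ρ e1
    obtain ⟨W2, v2, r2⟩ := fundV S hnontriv hzero_add hzero_div h2 ρ e2
    exact ⟨_, .pair v1 v2 h, by simp only [WRel]; exact ⟨W1, W2, rfl, r1, r2⟩⟩

theorem fundC {Q : Type} (S : CoSig Q)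
    (hnontriv : S.one ≠ S.zero)
    (hzero_add : ∀ q₁ q₂ : Q, S.le S.zero (S.add q₁ q₂) → q₁ = S.zero ∧ q₂ = S.zero)
    (hzero_div : ∀ q₁ q₂ : Q, S.mul q₁ q₂ = S.zero → q₁ = S.zero ∨ q₂ = S.zero)
    {γ : List Q} {Γ : List (VTy Q)} {M : Comp Q} {B : CTy Q}
    (h : CHasTy S γ Γ M B) : CSem S γ Γ M B := by
  intro ρ hρ
  cases h with
  | @lam _ _ q A M B h =>
    have ih := fundC S hnontriv hzero_add hzero_div h
    refine ⟨_, .lam (vle_refl S γ), ?_⟩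
    simp only [TRel]
    refine ⟨γ, ρ, M, rfl, fun W hW => ih (W :: ρ) (hρ.cons fun hq => ?_)⟩
    rcases hW with hW | hW
    · exact absurd hW.1 hq
    · exact hW.2
  | @app _ γ₁ γ₂ _ M V A q B h1 h2 h =>
    have ih1 := fundC S hnontriv hzero_add hzero_div h1
    have ih2 := fundV S hnontriv hzero_add hzero_div h2
    obtain ⟨e1, e2⟩ := hρ.add hzero_add h1.len ((vscale_len S q γ₂).trans h2.len) h
    obtain ⟨T, v1, r1⟩ := ih1 ρ e1
    simp only [TRel] at r1
    obtain ⟨γ', ρ', M', rfl, r1⟩ := r1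
    by_cases hq : q = S.zero
    · subst hq
      obtain ⟨T', v, r⟩ := r1 .bolt (.inl ⟨rfl, rfl⟩)
      rw [vadd_zero_right S _ _ (h1.len.trans h2.len.symm)] at h
      exact ⟨T', .appZero v1 v h, r⟩
    · obtain ⟨W, v2, r2⟩ := ih2 ρ (e2.unscale hzero_div hq)
      obtain ⟨T', v, r⟩ := r1 W (.inr ⟨hq, r2⟩)
      exact ⟨T', .app hq v1 v2 v h, r⟩
  | force h =>
    obtain ⟨W, v, r⟩ := fundV S hnontriv hzero_add hzero_div h ρ hρ
    simp only [WRel] at r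
    obtain ⟨γ', ρ', M', rfl, T, vT, rT⟩ := r
    exact ⟨T, .force v vT, rT⟩
  | @ret _ γ₁ _ q V A h1 h =>
    have ih1 := fundV S hnontriv hzero_add hzero_div h1
    by_cases hq : q = S.zero
    · subst hq
      exact ⟨_, .retZero (leZero_of S h), by simp [TRel]⟩
    · have e : EnvOk S (vscale S q γ₁) Γ ρ := by
        refine hρ.mono ((vscale_len S q γ₁).trans h1.len) fun x d i hx hd h0 => ?_
        obtain ⟨q', hq', hle⟩ := vle_get h i d hd
        rw [hx] at hq'; cases hq'; subst h0
        exact (hzero_add d S.zero (by rwa [S.add_zero])).1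
      obtain ⟨W, v, r⟩ := ih1 ρ (e.unscale hzero_div hq)
      exact ⟨_, .ret hq v h, by simp only [TRel]; exact ⟨_, rfl, .inr ⟨hq, r⟩⟩⟩
  | @letin _ γ₁ γ₂ _ q₁ q₂ M N A B h1 h2 h =>
    have ih1 := fundC S hnontriv hzero_add hzero_div h1
    have ih2 := fundC S hnontriv hzero_add hzero_div h2
    have l2 : γ₂.length = Γ.length := by simpa using h2.len
    obtain ⟨e1, e2⟩ := hρ.add hzero_add ((vscale_len S q₂ γ₁).trans h1.len) l2 h
    by_cases hq : q₂ = S.zero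
    · subst hq
      rw [S.mul_zero] at ih2
      obtain ⟨T, v, r⟩ := ih2 (.bolt :: ρ) (e2.cons fun hn => absurd rfl hn)
      rw [vadd_zero_left S _ _ (h1.len.trans l2.symm)] at h
      exact ⟨T, .letinZero v h, r⟩
    · obtain ⟨T, v, r⟩ := ih1 ρ (e1.unscale hzero_div hq)
      simp only [TRel] at r
      obtain ⟨W, rfl, hW⟩ := r
      obtain ⟨T', v', r'⟩ := ih2 (W :: ρ) (e2.cons fun hn => by
        rcases hW with hW | hW
        · exact absurd (by rw [hW.1, S.zero_mul]) hn
        · exact hW.2)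
      exact ⟨T', .letin hq v v' h, r'⟩
  | @split _ γ₁ γ₂ _ q V A₁ A₂ N B h1 h2 h =>
    have ih1 := fundV S hnontriv hzero_add hzero_div h1
    have ih2 := fundC S hnontriv hzero_add hzero_div h2
    have l2 : γ₂.length = Γ.length := by simpa using h2.len
    obtain ⟨e1, e2⟩ := hρ.add hzero_add ((vscale_len S q γ₁).trans h1.len) l2 h
    by_cases hq : q = S.zero
    · subst hq
      obtain ⟨T, v, r⟩ := ih2 (.bolt :: .bolt :: ρ)
        ((e2.cons fun hn => absurd rfl hn).cons fun hn => absurd rfl hn)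
      rw [vadd_zero_left S _ _ (h1.len.trans l2.symm)] at h
      exact ⟨T, .splitZero v h, r⟩
    · obtain ⟨W, v, r⟩ := ih1 ρ (e1.unscale hzero_div hq)
      simp only [WRel] at r
      obtain ⟨W1, W2, rfl, r1, r2⟩ := r
      obtain ⟨T', v', r'⟩ := ih2 (W2 :: W1 :: ρ) ((e2.cons fun _ => r1).cons fun _ => r2)
      exact ⟨T', .split hq v v' h, r'⟩
  | @cpair _ _ M₁ M₂ B₁ B₂ h1 h2 =>
    have ih1 := fundC S hnontriv hzero_add hzero_div h1 ρ hρ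
    have ih2 := fundC S hnontriv hzero_add hzero_div h2 ρ hρ
    refine ⟨_, .cpair (vle_refl S γ), ?_⟩
    simp only [TRel]
    exact ⟨γ, ρ, M₁, M₂, rfl, ih1, ih2⟩
  | fst h =>
    obtain ⟨T, v, r⟩ := fundC S hnontriv hzero_add hzero_div h ρ hρ
    simp only [TRel] at r
    obtain ⟨γ', ρ', M1, M2, rfl, ⟨T', v', r'⟩, _⟩ := r
    exact ⟨T', .fst v v', r'⟩
  | snd h =>
    obtain ⟨T, v, r⟩ := fundC S hnontriv hzero_add hzero_div h ρ hρ
    simp only [TRel] at r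
    obtain ⟨γ', ρ', M1, M2, rfl, _, ⟨T', v', r'⟩⟩ := r
    exact ⟨T', .snd v v', r'⟩
end

/-- Fundamental lemma of the resource logical relation: over a preordered
semiring that is nontrivial, whose preorder relates `0` below a sum only when
both summands are `0`, and with no nonzero zero divisors, syntactic
type-and-coeffect typing implies resource semantic typing, for values and for
computations. -/
theorem resource_fundamental_lemma {Q : Type} (S : CoSig Q)
    (hnontriv : S.one ≠ S.zero)
    (hzero_add : ∀ q₁ q₂ : Q, S.le S.zero (S.add q₁ q₂) → q₁ = S.zero ∧ q₂ = S.zero)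
    (hzero_div : ∀ q₁ q₂ : Q, S.mul q₁ q₂ = S.zero → q₁ = S.zero ∨ q₂ = S.zero) :
    (∀ {γ : List Q} {Γ : List (VTy Q)} {V : Val Q} {A : VTy Q},
      VHasTy S γ Γ V A → VSem S γ Γ V A) ∧
    (∀ {γ : List Q} {Γ : List (VTy Q)} {M : Comp Q} {B : CTy Q},
      CHasTy S γ Γ M B → CSem S γ Γ M B) := by
  exact ⟨fun h => fundV S hnontriv hzero_add hzero_div h,
    fun h => fundC S hnontriv hzero_add hzero_div h⟩

end CBPVCo
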